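/- arXiv:0809.2427 — 2 statements merged into one kernel-verified Lean document; each statement's English description precedes it below -/
import Mathlib

section
/- Let V be a complex inner product space, let u ∈ {−1, ω̄}, and let x_1, x_2, x_3 ∈ V satisfy |x_1|² = |x_2|² = |x_3|² = 3, ⟨x_1,x_2⟩ = −p, ⟨x_2,x_3⟩ = −p, and ⟨x_1,x_3⟩ = −u·p (the circuit diagram Circ_{3,u}). Set x_3' = x_2 − ū·x_3, where ū = conj(u). Then: |x_3'|² = 3, ⟨x_1,x_3'⟩ = 0, and ⟨x_2,x_3'⟩ = 3 + ū·p, which is a unit multiple of p (namely −ωp if u = −1 and p if u = ω̄); moreover {x_1, x_2, x_3'} generates the same ℤ[ω]-submodule of V as {x_1, x_2, x_3}. (Hence the lattices L(Circ_{3,−1}) and L(Circ_{3,ω̄}) are isometric to E_6^ℰ.) -/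
/- The circuit diagrams Circ_{3,-1} and Circ_{3,ω̄} are equivalent to the
   linear E₆ᵉ diagram: replacing x₃ by x₃' = x₂ - ū x₃ gives an orthogonal
   pair (x₁, x₃') with the stated inner products, generating the same
   ℤ[ω]-submodule. -/

open scoped ComplexInnerProductSpace

set_option synthInstance.maxHeartbeats 1000000
set_option maxHeartbeats 1000000

/-- `ω = e^{2πi/3}`. -/
noncomputable def ω : ℂ := Complex.exp (2 * Real.pi * Complex.I / 3)

/-- `p = 1 - ω̄`. -/
noncomputable def p : ℂ := 1 - starRingEnd ℂ ω

/-- The ring of Eisenstein integers `ℤ[ω]`, as a subring of `ℂ`. -/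
noncomputable def Eis : Subring ℂ := Subring.closure {ω}

/-!
When `|u| = 1`, the vector `x₂ - ū x₃` is orthogonal to `x₁` because
`⟪x₁, ū x₃⟫ = -|u|² p = ⟪x₁, x₂⟫`, and its norm is `6 + tr (ū p)`, where `tr z = z + z̄`.
For `u = -1` and `u = ω̄` this trace is `-3`, since `p + p̄ = 3` and `ω p = p - 3`.
As `ū` is a unit of `ℤ[ω]`, exchanging `x₃` for `x₂ - ū x₃` does not change the span.
-/

theorem span_insert_add_of_mem_span {R M : Type*} [Ring R] [AddCommGroup M] [Module R M]
    {s : Set M} {y : M} (hy : y ∈ Submodule.span R s) (z : M) :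
    Submodule.span R (insert (y + z) s) = Submodule.span R (insert z s) := by
  ext w
  have shift (a : R) : w + a • (y + z) = a • y + (w + a • z) := by
    rw [smul_add, add_left_comm]
  simp only [Submodule.mem_span_insert', shift,
    Submodule.add_mem_iff_right _ (Submodule.smul_mem _ _ hy)]

theorem span_insert_sub_smul_of_mem_span {R M : Type*} [Ring R] [AddCommGroup M] [Module R M]
    {s : Set M} {y : M} (hy : y ∈ Submodule.span R s) {c : R} (hc : IsUnit c) (z : M) :
    Submodule.span R (insert (y - c • z) s) = Submodule.span R (insert z s) := by
  rw [sub_eq_add_neg, ← neg_smul, span_insert_add_of_mem_span hy, Submodule.span_insert,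
    Submodule.span_singleton_smul_eq hc.neg, ← Submodule.span_insert]

theorem apply_sub_smul_self_of_isSymm {R M : Type*} [CommRing R] [AddCommGroup M] [Module R M]
    {I : R →+* R} {B : M →ₛₗ[I] M →ₗ[R] R} (hB : B.IsSymm) (c : R) (x y : M) :
    B (x - c • y) (x - c • y) =
      B x x - (c * B x y + I (c * B x y)) + I c * c * B y y := by
  simp only [map_sub, map_smul, map_smulₛₗ, LinearMap.sub_apply, LinearMap.smul_apply,
    smul_eq_mul, map_mul, hB.eq]
  ring

theorem isPrimitiveRoot_ω : IsPrimitiveRoot ω 3 := by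
  simpa [ω] using Complex.isPrimitiveRoot_exp 3 three_ne_zero

theorem norm_ω : ‖ω‖ = 1 :=
  isPrimitiveRoot_ω.norm'_eq_one three_ne_zero

theorem one_add_ω_add_ω_sq : 1 + ω + ω ^ 2 = 0 := by
  simpa [Finset.sum_range_succ] using isPrimitiveRoot_ω.geom_sum_eq_zero (by norm_num)

theorem conj_ω : starRingEnd ℂ ω = -1 - ω := by
  rw [← Complex.inv_eq_conj norm_ω]
  exact inv_eq_of_mul_eq_one_right (by linear_combination -one_add_ω_add_ω_sq)

theorem p_eq_two_add_ω : p = 2 + ω := by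
  rw [p, conj_ω]
  ring

theorem p_add_conj_p : p + starRingEnd ℂ p = 3 := by
  rw [p_eq_two_add_ω, map_add, map_ofNat, conj_ω]
  ring

theorem ω_mul_p : ω * p = p - 3 := by
  rw [p_eq_two_add_ω]
  linear_combination one_add_ω_add_ω_sq

theorem conj_mul_p_add_conj {u : ℂ} (hu : u = -1 ∨ u = starRingEnd ℂ ω) :
    starRingEnd ℂ u * p + starRingEnd ℂ (starRingEnd ℂ u * p) = -3 := by
  rcases hu with rfl | rfl
  · simp only [map_neg, map_one, neg_one_mul]
    linear_combination -p_add_conj_p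
  · rw [Complex.conj_conj, ω_mul_p, map_sub, map_ofNat]
    linear_combination p_add_conj_p

theorem norm_eq_one_of_eq_neg_one_or_conj_ω {u : ℂ} (hu : u = -1 ∨ u = starRingEnd ℂ ω) :
    ‖u‖ = 1 := by
  rcases hu with rfl | rfl <;> simp [norm_ω]

theorem ω_mem_Eis : ω ∈ Eis :=
  Subring.mem_closure_of_mem (Set.mem_singleton ω)

theorem conj_mem_Eis {z : ℂ} (hz : z ∈ Eis) : starRingEnd ℂ z ∈ Eis := by
  suffices Eis ≤ Eis.comap (starRingEnd ℂ) from this hz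
  rw [Eis, Subring.closure_le, Set.singleton_subset_iff]
  change starRingEnd ℂ ω ∈ Eis
  rw [conj_ω]
  exact sub_mem (neg_mem (one_mem _)) ω_mem_Eis

theorem isUnit_Eis_of_norm_eq_one {z : Eis} (hz : ‖(z : ℂ)‖ = 1) : IsUnit z :=
  .of_mul_eq_one ⟨starRingEnd ℂ z, conj_mem_Eis z.2⟩ <| Subtype.ext <| by
    simp [Complex.mul_conj', hz]

theorem span_Eis_insert_sub_smul {V : Type*} [AddCommGroup V] [Module ℂ V] {s : Set V} {y : V}
    (hy : y ∈ Submodule.span Eis s) {c : ℂ} (hc : c ∈ Eis) (hc_norm : ‖c‖ = 1) (z : V) :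
    Submodule.span Eis (insert (y - c • z) s) = Submodule.span Eis (insert z s) :=
  span_insert_sub_smul_of_mem_span hy (c := ⟨c, hc⟩) (isUnit_Eis_of_norm_eq_one hc_norm) z

theorem circ3_equiv_E6_general
    {V : Type*} [AddCommGroup V] [Module ℂ V] {B : V →ₗ⋆[ℂ] V →ₗ[ℂ] ℂ} (hB : B.IsSymm)
    {u : ℂ} (hu : u = -1 ∨ u = starRingEnd ℂ ω) {x₁ x₂ x₃ : V}
    (h2 : B x₂ x₂ = 3) (h3 : B x₃ x₃ = 3)
    (h12 : B x₁ x₂ = -p) (h23 : B x₂ x₃ = -p) (h13 : B x₁ x₃ = -(u * p)) :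
    B (x₂ - starRingEnd ℂ u • x₃) (x₂ - starRingEnd ℂ u • x₃) = 3 ∧
    B x₁ (x₂ - starRingEnd ℂ u • x₃) = 0 ∧
    B x₂ (x₂ - starRingEnd ℂ u • x₃) = 3 + starRingEnd ℂ u * p ∧
    (u = -1 → 3 + starRingEnd ℂ u * p = -(ω * p)) ∧
    (u = starRingEnd ℂ ω → 3 + starRingEnd ℂ u * p = p) ∧
    Submodule.span Eis ({x₁, x₂, x₂ - starRingEnd ℂ u • x₃} : Set V) =
      Submodule.span Eis ({x₁, x₂, x₃} : Set V) := by
  have u_norm : ‖u‖ = 1 := norm_eq_one_of_eq_neg_one_or_conj_ω hu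
  have u_mul_conj : u * starRingEnd ℂ u = 1 := by simp [Complex.mul_conj', u_norm]
  have conj_u_mem : starRingEnd ℂ u ∈ Eis := by
    rcases hu with rfl | rfl
    · simp
    · simpa using ω_mem_Eis
  refine ⟨?_, ?_, ?_, ?_, ?_, ?_⟩
  · rw [apply_sub_smul_self_of_isSymm hB, h2, h3, h23, mul_neg, map_neg, Complex.conj_conj]
    linear_combination conj_mul_p_add_conj hu + 3 * u_mul_conj
  · rw [map_sub, map_smul, h12, h13, smul_eq_mul]
    linear_combination p * u_mul_conj
  · rw [map_sub, map_smul, h2, h23, smul_eq_mul]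
    ring
  · rintro rfl
    rw [ω_mul_p, map_neg, map_one]
    ring
  · rintro rfl
    rw [Complex.conj_conj, ω_mul_p]
    ring
  · have x₂_mem : x₂ ∈ Submodule.span Eis {x₁, x₂} := Submodule.mem_span_of_mem (by simp)
    have rotate (z : V) : ({x₁, x₂, z} : Set V) = {z, x₁, x₂} := by
      rw [Set.pair_comm x₂, Set.insert_comm]
    rw [rotate, rotate, span_Eis_insert_sub_smul x₂_mem conj_u_mem (by simpa using u_norm)]

theorem circ3_equiv_E6
    {V : Type*} [NormedAddCommGroup V] [InnerProductSpace ℂ V]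
    (u : ℂ) (hu : u = -1 ∨ u = starRingEnd ℂ ω)
    (x₁ x₂ x₃ : V)
    (h1 : ⟪x₁, x₁⟫ = 3) (h2 : ⟪x₂, x₂⟫ = 3) (h3 : ⟪x₃, x₃⟫ = 3)
    (h12 : ⟪x₁, x₂⟫ = -p) (h23 : ⟪x₂, x₃⟫ = -p) (h13 : ⟪x₁, x₃⟫ = -(u * p)) :
    ⟪x₂ - starRingEnd ℂ u • x₃, x₂ - starRingEnd ℂ u • x₃⟫ = 3 ∧
    ⟪x₁, x₂ - starRingEnd ℂ u • x₃⟫ = 0 ∧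
    ⟪x₂, x₂ - starRingEnd ℂ u • x₃⟫ = 3 + starRingEnd ℂ u * p ∧
    (u = -1 → 3 + starRingEnd ℂ u * p = -(ω * p)) ∧
    (u = starRingEnd ℂ ω → 3 + starRingEnd ℂ u * p = p) ∧
    Submodule.span Eis ({x₁, x₂, x₂ - starRingEnd ℂ u • x₃} : Set V) =
      Submodule.span Eis ({x₁, x₂, x₃} : Set V) :=
  circ3_equiv_E6_general (B := innerₛₗ ℂ) ⟨fun x y => inner_conj_symm y x⟩ hu h2 h3 h12 h23 h13
end

section
/- Let x, y, z be elements of a group G and assume x braids with y: xyx = yxy. Then the following are equivalent: (i) xyzx = yzxy (the relation rel_4(x,y,z)); (ii) xyx⁻¹ commutes with z; (iii) yzy⁻¹ commutes with x. If moreover x braids with z (xzx = zxz), then (i)–(iii) are also equivalent to (iv): zxz⁻¹ commutes with y. -/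
/-!
In any group, `x * y * z * x = y * z * x * y` says that conjugation by `z` takes `x * y * x⁻¹` to
`y⁻¹ * x * y`. The braid relation between `x` and `y` says exactly that these two elements
coincide, so `z` commutes with them; conjugating by `y`, respectively by `x`, moves the conjugation
from one factor of the commuting pair to the other.
-/

/-- The braid relation between two elements, for which `x` is said to braid with `y`. -/
def Braids {M : Type*} [Mul M] (x y : M) : Prop :=
  x * y * x = y * x * y

protected theorem Braids.symm {M : Type*} [Mul M] {x y : M} (hxy : Braids x y) : Braids y x :=
  Eq.symm hxy

/-- The relation rel₄(x, y, z) on a cyclically indexed triple: the two words of length four read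
from `x` and from `y` agree. -/
def Rel4 {M : Type*} [Mul M] (x y z : M) : Prop :=
  x * y * z * x = y * z * x * y

section Group

variable {G : Type*} [Group G] {x y z : G}

theorem commute_inv_mul_mul_iff_commute_mul_mul_inv (g a b : G) :
    Commute (g⁻¹ * a * g) b ↔ Commute a (g * b * g⁻¹) := by
  rw [← Commute.conj_iff g]
  simp only [mul_assoc, mul_inv_cancel_left, mul_inv_cancel, mul_one]

theorem rel4_iff_semiconjBy (x y z : G) :
    Rel4 x y z ↔ SemiconjBy z (x * y * x⁻¹) (y⁻¹ * x * y) := by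
  have left_word : x * y * z * x = y * (y⁻¹ * x * y * z) * x := by group
  have right_word : y * z * x * y = y * (z * (x * y * x⁻¹)) * x := by group
  rw [Rel4, left_word, right_word, mul_left_inj, mul_right_inj, eq_comm, SemiconjBy]

theorem braids_iff_mul_mul_inv_eq : Braids x y ↔ x * y * x⁻¹ = y⁻¹ * x * y := by
  rw [Braids, mul_inv_eq_iff_eq_mul, mul_assoc y⁻¹, mul_assoc y⁻¹, eq_inv_mul_iff_mul_eq, eq_comm]
  simp only [mul_assoc]

namespace Braids

theorem rel4_iff_commute_conj_left (hxy : Braids x y) :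
    Rel4 x y z ↔ Commute (x * y * x⁻¹) z := by
  rw [rel4_iff_semiconjBy, ← braids_iff_mul_mul_inv_eq.mp hxy]
  exact Commute.symm_iff

theorem rel4_iff_commute_conj_middle (hxy : Braids x y) :
    Rel4 x y z ↔ Commute (y * z * y⁻¹) x := by
  rw [hxy.rel4_iff_commute_conj_left, braids_iff_mul_mul_inv_eq.mp hxy,
    commute_inv_mul_mul_iff_commute_mul_mul_inv, Commute.symm_iff]

theorem rel4_iff_commute_conj_right (hxy : Braids x y) (hxz : Braids x z) :
    Rel4 x y z ↔ Commute (z * x * z⁻¹) y := by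
  rw [hxy.rel4_iff_commute_conj_left, braids_iff_mul_mul_inv_eq.mp hxz.symm,
    commute_inv_mul_mul_iff_commute_mul_mul_inv, Commute.symm_iff]

end Braids

end Group

theorem rel4_characterizations
    {G : Type*} [Group G] (x y z : G)
    (hxy : x * y * x = y * x * y) :
    ((x * y * z * x = y * z * x * y) ↔ (x * y * x⁻¹) * z = z * (x * y * x⁻¹)) ∧
    ((x * y * z * x = y * z * x * y) ↔ (y * z * y⁻¹) * x = x * (y * z * y⁻¹)) ∧
    (x * z * x = z * x * z →
      ((x * y * z * x = y * z * x * y) ↔ (z * x * z⁻¹) * y = y * (z * x * z⁻¹))) := by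
  have braids_xy : Braids x y := hxy
  exact ⟨braids_xy.rel4_iff_commute_conj_left, braids_xy.rel4_iff_commute_conj_middle,
    fun braids_xz => braids_xy.rel4_iff_commute_conj_right braids_xz⟩
end
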